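/- Let Σ ∈ S^p and τ > 0, and define the alternating-minimization iterates L^{(k)} = D_τ^+(Σ − D^{(k−1)}), D^{(k)} = pdiag(Σ − L^{(k)}), started from any L^{(0)} ∈ S^p_+ with D^{(0)} = pdiag(Σ − L^{(0)}). Let x_k = (L^{(k)}, D^{(k)}), let x* be the unique minimizer of F(L,D) = τ‖L‖_* + (1/2)‖Σ − (L+D)‖_F² over L ∈ S^p_+ and diagonal D, and let R = max{ ‖vec((L,D) − x*)‖ : F(L,D) ≤ F(x₀), L ∈ S^p_+, D = pdiag(D) }. Then (i) x_k → x* as k → ∞, and (ii) for all k ≥ 1, F(x_{k+1}) − F(x*) ≤ max{ (F(x₀) − F(x*))/2^k , 16R²/k }. -/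

import Mathlib

open Matrix MeasureTheory ProbabilityTheory BigOperators

/-- `pdiag M`: the matrix `M` with all off-diagonal entries set to zero. -/
def pdiag {p : ℕ} (M : Matrix (Fin p) (Fin p) ℝ) : Matrix (Fin p) (Fin p) ℝ :=
  Matrix.of fun i j => if i = j then M i j else 0

/-- `poffdiag M = M - pdiag M`: the off-diagonal part of `M`. -/
def poffdiag {p : ℕ} (M : Matrix (Fin p) (Fin p) ℝ) : Matrix (Fin p) (Fin p) ℝ :=
  M - pdiag M

/-- Frobenius norm of a real matrix. -/
noncomputable def frobNorm {p q : ℕ} (M : Matrix (Fin p) (Fin q) ℝ) : ℝ :=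
  Real.sqrt (∑ i, ∑ j, (M i j) ^ 2)

/-- The singular values of a real matrix (as the square roots of the eigenvalues of `Mᵀ M`,
in no particular order, with multiplicity, padded by zeros). -/
noncomputable def singVals {p q : ℕ} (M : Matrix (Fin p) (Fin q) ℝ) : Fin q → ℝ :=
  fun i => Real.sqrt ((Matrix.posSemidef_conjTranspose_mul_self M).isHermitian.eigenvalues i)

/-- Nuclear norm: sum of the singular values. -/
noncomputable def nucNorm {p q : ℕ} (M : Matrix (Fin p) (Fin q) ℝ) : ℝ :=
  ∑ i, singVals M i

/-- Spectral (operator) norm: the largest singular value. -/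
noncomputable def specNorm {p q : ℕ} (M : Matrix (Fin p) (Fin q) ℝ) : ℝ :=
  ⨆ i, singVals M i

/-- `(2,∞)`-norm: the maximal Euclidean norm of a row. -/
noncomputable def rowNorm {p r : ℕ} (U : Matrix (Fin p) (Fin r) ℝ) : ℝ :=
  ⨆ i, Real.sqrt (∑ j, (U i j) ^ 2)

/-- `sinΘ` distance between two column-orthonormal matrices, measured in spectral norm:
`‖sinΘ(U, V)‖ = ‖U Uᵀ - V Vᵀ‖`. -/
noncomputable def sinTheta {p r : ℕ} (U V : Matrix (Fin p) (Fin r) ℝ) : ℝ :=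
  specNorm (U * Uᵀ - V * Vᵀ)

/-- `eigDesc M k` : the `k`-th largest eigenvalue (1-indexed) of a symmetric matrix `M`. -/
noncomputable def eigDesc {p : ℕ} (M : Matrix (Fin p) (Fin p) ℝ) (k : ℕ) : ℝ :=
  if h : M.IsHermitian then
    (((List.ofFn h.eigenvalues).insertionSort (· ≥ ·)).getD (k - 1) 0)
  else 0

/-- `svDesc M k` : the `k`-th largest singular value (1-indexed) of `M`. -/
noncomputable def svDesc {p q : ℕ} (M : Matrix (Fin p) (Fin q) ℝ) (k : ℕ) : ℝ :=
  (((List.ofFn (singVals M)).insertionSort (· ≥ ·)).getD (k - 1) 0)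

/-- Eigenvalue soft-thresholding operator `D_τ⁺`: for a symmetric matrix
`M = Σᵢ λᵢ uᵢ uᵢᵀ`, `D_τ⁺(M) = Σᵢ max (λᵢ - τ) 0 • uᵢ uᵢᵀ` (junk value `0` otherwise). -/
noncomputable def softThresh {p : ℕ} (τ : ℝ) (M : Matrix (Fin p) (Fin p) ℝ) :
    Matrix (Fin p) (Fin p) ℝ :=
  if h : M.IsHermitian then
    (h.eigenvectorUnitary : Matrix (Fin p) (Fin p) ℝ) *
      Matrix.diagonal (fun i => max (h.eigenvalues i - τ) 0) *
      (star (h.eigenvectorUnitary : Matrix (Fin p) (Fin p) ℝ))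
  else 0

/-- The `p × r` matrix whose columns are (orthonormal) eigenvectors of the symmetric matrix
`M` corresponding to its `r` largest eigenvalues ("first `r` eigenvectors"). -/
noncomputable def topEigenvectors {p : ℕ} (M : Matrix (Fin p) (Fin p) ℝ) (r : ℕ) :
    Matrix (Fin p) (Fin r) ℝ :=
  if h : M.IsHermitian then
    Matrix.of fun i (j : Fin r) =>
      if hj : (j : ℕ) < p then
        (h.eigenvectorUnitary : Matrix (Fin p) (Fin p) ℝ) i
          ((Tuple.sort h.eigenvalues) (Fin.rev ⟨(j : ℕ), hj⟩))
      else 0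
  else 0

/-- The objective function `F(L, D) = τ ‖L‖_* + (1/2) ‖Σ - (L + D)‖_F²`. -/
noncomputable def objF {p : ℕ} (τ : ℝ) (S L D : Matrix (Fin p) (Fin p) ℝ) : ℝ :=
  τ * nucNorm L + (1 / 2) * (frobNorm (S - (L + D))) ^ 2

/-- `(L, D)` is a global minimizer of the relaxed-MTFA objective `F` over
`L ∈ S^p₊` and diagonal `D`. -/
def IsRMTFAMin {p : ℕ} (τ : ℝ) (S L D : Matrix (Fin p) (Fin p) ℝ) : Prop :=
  L.PosSemidef ∧ D = pdiag D ∧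
    ∀ L' D' : Matrix (Fin p) (Fin p) ℝ, L'.PosSemidef → D' = pdiag D' →
      objF τ S L D ≤ objF τ S L' D'

/-! ### Helper lemmas -/

/-- A conjugated nonnegative diagonal matrix is PSD. -/
lemma aux_conj_psd {p : ℕ} (U : Matrix (Fin p) (Fin p) ℝ) (d : Fin p → ℝ) (hd : ∀ i, 0 ≤ d i) :
    (U * Matrix.diagonal d * star U).PosSemidef := by
  have h : (Matrix.diagonal d).PosSemidef := Matrix.PosSemidef.diagonal hd
  have := h.mul_mul_conjTranspose_same U
  simpa [Matrix.star_eq_conjTranspose] using this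

/-- Product of two matrices diagonalised by the same orthogonal matrix. -/
lemma aux_conj_mul {p : ℕ} (U : Matrix.unitaryGroup (Fin p) ℝ) (d e : Fin p → ℝ) :
    ((U : Matrix (Fin p) (Fin p) ℝ) * Matrix.diagonal d * star (U : Matrix (Fin p) (Fin p) ℝ)) *
      ((U : Matrix (Fin p) (Fin p) ℝ) * Matrix.diagonal e * star (U : Matrix (Fin p) (Fin p) ℝ))
    = (U : Matrix (Fin p) (Fin p) ℝ) * Matrix.diagonal (fun i => d i * e i) *
        star (U : Matrix (Fin p) (Fin p) ℝ) := by
  have hU : star (U : Matrix (Fin p) (Fin p) ℝ) * (U : Matrix (Fin p) (Fin p) ℝ) = 1 :=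
    Unitary.coe_star_mul_self U
  rw [← Matrix.diagonal_mul_diagonal]
  calc _ = (U : Matrix (Fin p) (Fin p) ℝ) * Matrix.diagonal d *
        (star (U : Matrix (Fin p) (Fin p) ℝ) * (U : Matrix (Fin p) (Fin p) ℝ)) *
        Matrix.diagonal e * star (U : Matrix (Fin p) (Fin p) ℝ) := by
        simp only [Matrix.mul_assoc]
    _ = _ := by rw [hU]; simp only [Matrix.mul_assoc, Matrix.mul_one]

lemma aux_conj_trace {p : ℕ} (U : Matrix.unitaryGroup (Fin p) ℝ) (d : Fin p → ℝ) :
    ((U : Matrix (Fin p) (Fin p) ℝ) * Matrix.diagonal d *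
      star (U : Matrix (Fin p) (Fin p) ℝ)).trace = ∑ i, d i := by
  have hU : star (U : Matrix (Fin p) (Fin p) ℝ) * (U : Matrix (Fin p) (Fin p) ℝ) = 1 :=
    Unitary.coe_star_mul_self U
  rw [Matrix.mul_assoc, Matrix.trace_mul_comm, Matrix.mul_assoc, hU, Matrix.mul_one,
    Matrix.trace_diagonal]

lemma aux_spectral {p : ℕ} {A : Matrix (Fin p) (Fin p) ℝ} (hA : A.IsHermitian) :
    A = (hA.eigenvectorUnitary : Matrix (Fin p) (Fin p) ℝ) *
      Matrix.diagonal (fun i => hA.eigenvalues i) *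
      star (hA.eigenvectorUnitary : Matrix (Fin p) (Fin p) ℝ) := by
  have := hA.spectral_theorem
  rw [Unitary.conjStarAlgAut_apply] at this
  exact this

open scoped MatrixOrder in
lemma aux_sq_inj {p : ℕ} {A B : Matrix (Fin p) (Fin p) ℝ} (hA : A.PosSemidef)
    (hB : B.PosSemidef) (h : A * A = B * B) : A = B := by
  have hA' := Matrix.nonneg_iff_posSemidef.mpr hA
  have hB' := Matrix.nonneg_iff_posSemidef.mpr hB
  rw [← CFC.sqrt_mul_self A hA', h, CFC.sqrt_mul_self B hB']

open scoped MatrixOrder in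
lemma aux_psd_factor {p : ℕ} {A : Matrix (Fin p) (Fin p) ℝ} (hA : A.PosSemidef) :
    ∃ B : Matrix (Fin p) (Fin p) ℝ, A = Bᵀ * B := by
  have hA' := Matrix.nonneg_iff_posSemidef.mpr hA
  obtain ⟨B, hB⟩ := CStarAlgebra.nonneg_iff_eq_star_mul_self.mp hA'
  exact ⟨B, by simpa [Matrix.star_eq_conjTranspose] using hB⟩

lemma aux_nuc {p : ℕ} {L : Matrix (Fin p) (Fin p) ℝ} (hL : L.PosSemidef) :
    nucNorm L = L.trace := by
  set h := (Matrix.posSemidef_conjTranspose_mul_self L).isHermitian with hh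
  have hnn := (Matrix.posSemidef_conjTranspose_mul_self L).eigenvalues_nonneg
  have key : (h.eigenvectorUnitary : Matrix (Fin p) (Fin p) ℝ) *
      Matrix.diagonal (singVals L) *
      star (h.eigenvectorUnitary : Matrix (Fin p) (Fin p) ℝ) = L := by
    apply aux_sq_inj (aux_conj_psd _ _ fun i => Real.sqrt_nonneg _) hL
    refine (aux_conj_mul _ _ _).trans ?_
    have e : (fun i => singVals L i * singVals L i) = fun i => h.eigenvalues i := by
      funext i
      exact Real.mul_self_sqrt (hnn i)
    change (h.eigenvectorUnitary : Matrix (Fin p) (Fin p) ℝ) *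
      Matrix.diagonal (fun i => singVals L i * singVals L i) *
      star (h.eigenvectorUnitary : Matrix (Fin p) (Fin p) ℝ) = _
    rw [e, ← aux_spectral h, hL.isHermitian.eq]
  have := aux_conj_trace h.eigenvectorUnitary (singVals L)
  rw [key] at this
  rw [this]; rfl

/-- Entrywise inner product. -/
def aip {p : ℕ} (A B : Matrix (Fin p) (Fin p) ℝ) : ℝ := ∑ i, ∑ j, A i j * B i j

/-- Squared Frobenius norm. -/
def afs {p : ℕ} (A : Matrix (Fin p) (Fin p) ℝ) : ℝ := ∑ i, ∑ j, (A i j) ^ 2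

lemma afs_nonneg {p : ℕ} (A : Matrix (Fin p) (Fin p) ℝ) : 0 ≤ afs A :=
  Finset.sum_nonneg fun _ _ => Finset.sum_nonneg fun _ _ => sq_nonneg _

lemma frob_sq {p : ℕ} (A : Matrix (Fin p) (Fin p) ℝ) : frobNorm A ^ 2 = afs A :=
  Real.sq_sqrt (afs_nonneg A)

lemma afs_mul_le {p : ℕ} (A B : Matrix (Fin p) (Fin p) ℝ) : afs (A * B) ≤ afs A * afs B := by
  have hB : afs B = ∑ j, ∑ k, (B k j) ^ 2 := Finset.sum_comm
  rw [hB]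
  unfold afs
  rw [Finset.sum_mul_sum]
  refine Finset.sum_le_sum fun i _ => Finset.sum_le_sum fun j _ => ?_
  rw [Matrix.mul_apply]
  exact Finset.sum_mul_sq_le_sq_mul_sq _ _ _

lemma afs_transpose {p : ℕ} (A : Matrix (Fin p) (Fin p) ℝ) : afs Aᵀ = afs A := Finset.sum_comm

lemma aip_trace {p : ℕ} (A B : Matrix (Fin p) (Fin p) ℝ) : aip A B = (Aᵀ * B).trace := by
  simp only [aip, Matrix.trace, Matrix.diag, Matrix.mul_apply, Matrix.transpose_apply]
  exact Finset.sum_comm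

lemma afs_trace {p : ℕ} (A : Matrix (Fin p) (Fin p) ℝ) : afs A = (Aᵀ * A).trace := by
  rw [← aip_trace]; simp [afs, aip, sq]

lemma aip_factor {p : ℕ} (B C : Matrix (Fin p) (Fin p) ℝ) :
    aip (Bᵀ * B) (Cᵀ * C) = afs (B * Cᵀ) := by
  rw [aip_trace, afs_trace]
  simp only [Matrix.transpose_mul, Matrix.transpose_transpose]
  rw [← Matrix.mul_assoc, Matrix.trace_mul_comm]
  simp only [Matrix.mul_assoc]

lemma aip_psd_nonneg {p : ℕ} {A B : Matrix (Fin p) (Fin p) ℝ} (hA : A.PosSemidef)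
    (hB : B.PosSemidef) : 0 ≤ aip A B := by
  obtain ⟨a, rfl⟩ := aux_psd_factor hA
  obtain ⟨b, rfl⟩ := aux_psd_factor hB
  rw [aip_factor]; exact afs_nonneg _

lemma afs_psd_mul {p : ℕ} {A B : Matrix (Fin p) (Fin p) ℝ} (hA : A.PosSemidef)
    (hB : B.PosSemidef) : afs (A * B) ≤ A.trace * aip A B * B.trace := by
  obtain ⟨a, rfl⟩ := aux_psd_factor hA
  obtain ⟨b, rfl⟩ := aux_psd_factor hB
  rw [aip_factor, ← afs_trace, ← afs_trace]
  have e : aᵀ * a * (bᵀ * b) = aᵀ * (a * bᵀ) * b := by simp only [Matrix.mul_assoc]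
  rw [e]
  refine (afs_mul_le _ _).trans (mul_le_mul_of_nonneg_right ?_ (afs_nonneg _))
  refine (afs_mul_le _ _).trans ?_
  rw [afs_transpose]

lemma aip_add {p : ℕ} (A B C : Matrix (Fin p) (Fin p) ℝ) : aip A (B + C) = aip A B + aip A C := by
  simp [aip, mul_add, Finset.sum_add_distrib]

lemma aip_sub {p : ℕ} (A B C : Matrix (Fin p) (Fin p) ℝ) : aip A (B - C) = aip A B - aip A C := by
  simp [aip, mul_sub, Finset.sum_sub_distrib]

lemma aip_smul {p : ℕ} (t : ℝ) (A B : Matrix (Fin p) (Fin p) ℝ) :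
    aip A (t • B) = t * aip A B := by
  simp only [aip, Matrix.smul_apply, smul_eq_mul, Finset.mul_sum]
  refine Finset.sum_congr rfl fun i _ => Finset.sum_congr rfl fun j _ => ?_
  ring

/-- Residual of soft thresholding. -/
lemma soft_opt {p : ℕ} {τ : ℝ} {M : Matrix (Fin p) (Fin p) ℝ} (hM : M.IsHermitian) :
    (softThresh τ M).PosSemidef ∧
    ∀ X : Matrix (Fin p) (Fin p) ℝ, X.PosSemidef →
      0 ≤ aip (τ • (1 : Matrix (Fin p) (Fin p) ℝ) + softThresh τ M - M) (X - softThresh τ M) := by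
  have hs : softThresh τ M = (hM.eigenvectorUnitary : Matrix (Fin p) (Fin p) ℝ) *
      Matrix.diagonal (fun i => max (hM.eigenvalues i - τ) 0) *
      (star (hM.eigenvectorUnitary : Matrix (Fin p) (Fin p) ℝ)) := by
    rw [softThresh, dif_pos hM]
  have hU : (hM.eigenvectorUnitary : Matrix (Fin p) (Fin p) ℝ) *
      star (hM.eigenvectorUnitary : Matrix (Fin p) (Fin p) ℝ) = 1 :=
    Unitary.coe_mul_star_self hM.eigenvectorUnitary
  have hpsd : (softThresh τ M).PosSemidef := by
    rw [hs]; exact aux_conj_psd _ _ fun i => le_max_right _ _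
  refine ⟨hpsd, fun X hX => ?_⟩
  have hW : τ • (1 : Matrix (Fin p) (Fin p) ℝ) + softThresh τ M - M =
      (hM.eigenvectorUnitary : Matrix (Fin p) (Fin p) ℝ) *
      Matrix.diagonal (fun i => max (τ - hM.eigenvalues i) 0) *
      (star (hM.eigenvectorUnitary : Matrix (Fin p) (Fin p) ℝ)) := by
    have e : Matrix.diagonal (fun i => max (τ - hM.eigenvalues i) 0) =
        τ • (1 : Matrix (Fin p) (Fin p) ℝ) +
        Matrix.diagonal (fun i => max (hM.eigenvalues i - τ) 0) -
        Matrix.diagonal (fun i => hM.eigenvalues i) := by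
      rw [← Matrix.diagonal_one, ← Matrix.diagonal_smul, Matrix.diagonal_add, Matrix.diagonal_sub]
      congr 1
      funext i
      simp only [Pi.smul_apply, smul_eq_mul, mul_one]
      rcases le_total (hM.eigenvalues i) τ with h | h
      · rw [max_eq_left (by linarith), max_eq_right (by linarith)]; ring
      · rw [max_eq_right (by linarith), max_eq_left (by linarith)]; ring
    rw [e, Matrix.mul_sub, Matrix.mul_add, Matrix.sub_mul, Matrix.add_mul, ← hs,
      ← aux_spectral hM, Matrix.mul_smul, Matrix.mul_one, Matrix.smul_mul, hU]
  have hWp : (τ • (1 : Matrix (Fin p) (Fin p) ℝ) + softThresh τ M - M).PosSemidef := by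
    rw [hW]; exact aux_conj_psd _ _ fun i => le_max_right _ _
  have hz : aip (τ • (1 : Matrix (Fin p) (Fin p) ℝ) + softThresh τ M - M) (softThresh τ M) = 0 := by
    have ht : (τ • (1 : Matrix (Fin p) (Fin p) ℝ) + softThresh τ M - M)ᵀ =
        τ • (1 : Matrix (Fin p) (Fin p) ℝ) + softThresh τ M - M := by
      simpa using hWp.isHermitian.eq
    rw [aip_trace, ht, hW, hs, aux_conj_mul, aux_conj_trace]
    refine Finset.sum_eq_zero fun i _ => ?_
    rcases le_total (hM.eigenvalues i) τ with h | h
    · rw [max_eq_right (a := hM.eigenvalues i - τ) (by linarith), mul_zero]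
    · rw [max_eq_right (a := τ - hM.eigenvalues i) (by linarith), zero_mul]
  rw [aip_sub, hz, sub_zero]
  exact aip_psd_nonneg hWp hX

/-- The objective after partial minimisation over `D`. -/
noncomputable def aG {p : ℕ} (τ : ℝ) (S X : Matrix (Fin p) (Fin p) ℝ) : ℝ :=
  ∑ i, ∑ j, if i = j then τ * X i j else (1 / 2) * (S i j - X i j) ^ 2

/-- Squared norm of the off-diagonal part. -/
def aoff {p : ℕ} (X : Matrix (Fin p) (Fin p) ℝ) : ℝ :=
  ∑ i, ∑ j, if i = j then 0 else (X i j) ^ 2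

lemma aoff_nonneg {p : ℕ} (A : Matrix (Fin p) (Fin p) ℝ) : 0 ≤ aoff A :=
  Finset.sum_nonneg fun _ _ => Finset.sum_nonneg fun _ _ => by
    split_ifs
    · exact le_rfl
    · exact sq_nonneg _

lemma objF_eq {p : ℕ} {τ : ℝ} {S L D : Matrix (Fin p) (Fin p) ℝ} (hL : L.PosSemidef)
    (hD : D = pdiag D) :
    objF τ S L D = aG τ S L + (1 / 2) * ∑ i, (S i i - L i i - D i i) ^ 2 := by
  have hD' : ∀ i j, i ≠ j → D i j = 0 := by
    intro i j hij
    rw [hD]; simp [pdiag, hij]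
  rw [objF, aux_nuc hL, frob_sq]
  have h1 : L.trace = ∑ i, ∑ j, if i = j then L i j else 0 := by
    simp [Matrix.trace]
  have h2 : ∑ i, (S i i - L i i - D i i) ^ 2 =
      ∑ i, ∑ j, if i = j then (S i j - L i j - D i j) ^ 2 else 0 := by
    simp
  rw [h1, h2, afs, aG]
  simp only [Finset.mul_sum, ← Finset.sum_add_distrib]
  refine Finset.sum_congr rfl fun i _ => Finset.sum_congr rfl fun j _ => ?_
  by_cases h : i = j
  · simp [h]; ring
  · simp [h, hD' i j h]

/-- Gradient of `aG` at `L`. -/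
def aZ {p : ℕ} (τ : ℝ) (S L : Matrix (Fin p) (Fin p) ℝ) : Matrix (Fin p) (Fin p) ℝ :=
  Matrix.of fun i j => if i = j then τ else L i j - S i j

lemma aG_expand {p : ℕ} (τ : ℝ) (S L E : Matrix (Fin p) (Fin p) ℝ) :
    aG τ S (L + E) = aG τ S L + aip (aZ τ S L) E + (1 / 2) * aoff E := by
  simp only [aG, aip, aoff, aZ, Finset.mul_sum, ← Finset.sum_add_distrib]
  refine Finset.sum_congr rfl fun i _ => Finset.sum_congr rfl fun j _ => ?_
  by_cases h : i = j
  · simp [h]; ring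
  · simp [h]; ring

/-- One-step inequality of the proximal gradient method. -/
lemma prox_step {p : ℕ} {τ : ℝ} {S L X : Matrix (Fin p) (Fin p) ℝ} (hS : S.IsHermitian)
    (hX : X.PosSemidef) :
    (softThresh τ (S - pdiag (S - L))).PosSemidef ∧
    aG τ S (softThresh τ (S - pdiag (S - L))) + (1 / 2) *
      afs (X - softThresh τ (S - pdiag (S - L))) ≤ aG τ S X + (1 / 2) * afs (X - L) := by
  have hM : (S - pdiag (S - L)).IsHermitian := by
    refine hS.sub ?_
    ext i j
    simp only [pdiag, Matrix.conjTranspose_apply, Matrix.of_apply, star_trivial]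
    by_cases h : i = j
    · simp [h]
    · simp [h, Ne.symm h]
  obtain ⟨h1, h2⟩ := soft_opt (τ := τ) hM
  refine ⟨h1, ?_⟩
  have h3 := h2 X hX
  generalize softThresh τ (S - pdiag (S - L)) = N at *
  suffices aip (τ • (1 : Matrix (Fin p) (Fin p) ℝ) + N - (S - pdiag (S - L))) (X - N) +
      (aG τ S N + (1 / 2) * afs (X - N)) ≤ aG τ S X + (1 / 2) * afs (X - L) by linarith
  simp only [aG, aip, afs, Finset.mul_sum, ← Finset.sum_add_distrib]
  refine Finset.sum_le_sum fun i _ => Finset.sum_le_sum fun j _ => ?_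
  by_cases h : i = j
  · subst h
    simp [pdiag]
    nlinarith [sq_nonneg (N i i - L i i)]
  · simp [pdiag, h]
    nlinarith [sq_nonneg (X i j - L i j)]

lemma opt_grad {p : ℕ} {τ : ℝ} {S L : Matrix (Fin p) (Fin p) ℝ} (hL : L.PosSemidef)
    (hopt : ∀ X : Matrix (Fin p) (Fin p) ℝ, X.PosSemidef → aG τ S L ≤ aG τ S X)
    {X : Matrix (Fin p) (Fin p) ℝ} (hX : X.PosSemidef) : 0 ≤ aip (aZ τ S L) (X - L) := by
  by_contra hc
  push Not at hc
  set c := aip (aZ τ S L) (X - L) with hcdef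
  set q := aoff (X - L) with hq
  have hq0 : 0 ≤ q := aoff_nonneg _
  have hpos : 0 < q - c := by linarith
  set t := -c / (q - c) with ht
  have ht0 : 0 < t := div_pos (by linarith) hpos
  have ht1 : t ≤ 1 := by rw [ht, div_le_one hpos]; linarith
  have htm : t * (q - c) = -c := by rw [ht]; field_simp
  have hP : (L + t • (X - L)).PosSemidef := by
    have e : L + t • (X - L) = (1 - t) • L + t • X := by
      rw [smul_sub, sub_smul, one_smul]; abel
    rw [e]
    exact (hL.smul (by linarith)).add (hX.smul ht0.le)
  have h1 := hopt _ hP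
  have h2 : aoff (t • (X - L)) = t ^ 2 * q := by
    rw [hq]
    simp only [aoff, Finset.mul_sum]
    refine Finset.sum_congr rfl fun i _ => Finset.sum_congr rfl fun j _ => ?_
    by_cases h : i = j
    · simp [h]
    · simp [h]; ring
  rw [aG_expand, aip_smul, h2, ← hcdef] at h1
  have h3 : 0 ≤ t * (c + 1 / 2 * (t * q)) := by nlinarith
  have h4 : 0 ≤ c + 1 / 2 * (t * q) := nonneg_of_mul_nonneg_right h3 ht0
  nlinarith

lemma opt_Z {p : ℕ} {τ : ℝ} {S L : Matrix (Fin p) (Fin p) ℝ} (hS : S.IsHermitian)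
    (hL : L.PosSemidef)
    (hopt : ∀ X : Matrix (Fin p) (Fin p) ℝ, X.PosSemidef → aG τ S L ≤ aG τ S X) :
    (aZ τ S L).PosSemidef ∧ aip (aZ τ S L) L = 0 := by
  constructor
  · refine Matrix.PosSemidef.of_dotProduct_mulVec_nonneg ?_ ?_
    · ext i j
      have h1 : S j i = S i j := by simpa using hS.apply i j
      have h2 : L j i = L i j := by simpa using hL.isHermitian.apply i j
      simp only [aZ, Matrix.conjTranspose_apply, Matrix.of_apply, star_trivial, h1, h2,
        eq_comm (a := j)]
    · intro x
      have hv := Matrix.posSemidef_vecMulVec_self_star x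
      have := opt_grad hL hopt (hL.add hv)
      rw [add_sub_cancel_left] at this
      refine this.trans_eq ?_
      simp only [aip, dotProduct, Matrix.mulVec, Matrix.vecMulVec_apply, Finset.mul_sum,
        Pi.star_apply, star_trivial]
      refine Finset.sum_congr rfl fun i _ => Finset.sum_congr rfl fun j _ => ?_
      ring
  · have h0 := opt_grad hL hopt Matrix.PosSemidef.zero
    have h2 := opt_grad hL hopt (hL.add hL)
    rw [add_sub_cancel_left] at h2
    rw [zero_sub, ← neg_one_smul ℝ L, aip_smul] at h0
    linarith

lemma entry_sq_le_afs {p : ℕ} (A : Matrix (Fin p) (Fin p) ℝ) (i j : Fin p) :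
    (A i j) ^ 2 ≤ afs A := by
  refine le_trans ?_ (Finset.single_le_sum (f := fun i => ∑ j, (A i j) ^ 2)
    (fun i _ => Finset.sum_nonneg fun _ _ => sq_nonneg _) (Finset.mem_univ i))
  exact Finset.single_le_sum (f := fun j => (A i j) ^ 2) (fun _ _ => sq_nonneg _)
    (Finset.mem_univ j)

lemma entry_sq_le_aoff {p : ℕ} (A : Matrix (Fin p) (Fin p) ℝ) {i j : Fin p} (hij : i ≠ j) :
    (A i j) ^ 2 ≤ aoff A := by
  have hnn : ∀ i j : Fin p, 0 ≤ (if i = j then 0 else (A i j) ^ 2) := fun i j => by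
    split_ifs
    · exact le_rfl
    · exact sq_nonneg _
  refine le_trans ?_ (Finset.single_le_sum (f := fun i => ∑ j, if i = j then 0 else (A i j) ^ 2)
    (fun i _ => Finset.sum_nonneg fun j _ => hnn i j) (Finset.mem_univ i))
  refine le_trans ?_ (Finset.single_le_sum (f := fun j => if i = j then 0 else (A i j) ^ 2)
    (fun j _ => hnn i j) (Finset.mem_univ j))
  simp [hij]

lemma tendsto_zero_of_sq_le {u v : ℕ → ℝ} (h : ∀ k, (u k) ^ 2 ≤ v k)
    (hv : Filter.Tendsto v Filter.atTop (nhds 0)) : Filter.Tendsto u Filter.atTop (nhds 0) := by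
  have h1 : Filter.Tendsto (fun k => (u k) ^ 2) Filter.atTop (nhds 0) :=
    squeeze_zero (fun k => sq_nonneg _) h hv
  have h2 := (Real.continuous_sqrt.tendsto 0).comp h1
  rw [Real.sqrt_zero] at h2
  rw [tendsto_zero_iff_abs_tendsto_zero]
  refine h2.congr fun k => ?_
  simp [Real.sqrt_sq_eq_abs]

/-- Minimizing sequences of bounded trace converge entrywise. -/
lemma entry_tendsto {p : ℕ} {τ : ℝ} (hτ : 0 < τ) {S L : Matrix (Fin p) (Fin p) ℝ}
    (hS : S.IsHermitian) (hL : L.PosSemidef)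
    (hopt : ∀ X : Matrix (Fin p) (Fin p) ℝ, X.PosSemidef → aG τ S L ≤ aG τ S X)
    (X : ℕ → Matrix (Fin p) (Fin p) ℝ) (hX : ∀ k, (X k).PosSemidef)
    (hlim : Filter.Tendsto (fun k => aG τ S (X k) - aG τ S L) Filter.atTop (nhds 0))
    (T : ℝ) (hT : ∀ k, (X k).trace ≤ T) (i j : Fin p) :
    Filter.Tendsto (fun k => (X k - L) i j) Filter.atTop (nhds 0) := by
  obtain ⟨hZ, hZL⟩ := opt_Z hS hL hopt
  have hgap : ∀ k, aG τ S (X k) - aG τ S L =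
      aip (aZ τ S L) (X k) + (1 / 2) * aoff (X k - L) := by
    intro k
    have := aG_expand τ S L (X k - L)
    rw [add_sub_cancel, aip_sub, hZL] at this
    linarith
  have hoff : ∀ i j : Fin p, i ≠ j →
      Filter.Tendsto (fun k => (X k - L) i j) Filter.atTop (nhds 0) := by
    intro i j hij
    refine tendsto_zero_of_sq_le (v := fun k => 2 * (aG τ S (X k) - aG τ S L)) (fun k => ?_) ?_
    · have h1 := entry_sq_le_aoff (X k - L) hij
      have h2 := aip_psd_nonneg hZ (hX k)
      have h3 := hgap k
      linarith
    · simpa using hlim.const_mul 2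
  by_cases hij : i = j
  swap
  · exact hoff i j hij
  subst hij
  have hZ0 : aZ τ S L * L = 0 := by
    have h := afs_psd_mul hZ hL
    rw [hZL, mul_zero, zero_mul] at h
    ext a b
    have := entry_sq_le_afs (aZ τ S L * L) a b
    have h0 : ((aZ τ S L * L) a b) ^ 2 = 0 := le_antisymm (this.trans h) (sq_nonneg _)
    simpa using h0
  have hZX : Filter.Tendsto (fun k => (aZ τ S L * X k) i i) Filter.atTop (nhds 0) := by
    refine tendsto_zero_of_sq_le
      (v := fun k => ((aZ τ S L).trace * T) * (aG τ S (X k) - aG τ S L)) (fun k => ?_) ?_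
    · refine (entry_sq_le_afs _ i i).trans ((afs_psd_mul hZ (hX k)).trans ?_)
      have h1 : 0 ≤ (aZ τ S L).trace := hZ.trace_nonneg
      have h2 : 0 ≤ (X k).trace := (hX k).trace_nonneg
      have h3 := aip_psd_nonneg hZ (hX k)
      have h4 : aip (aZ τ S L) (X k) ≤ aG τ S (X k) - aG τ S L := by
        have := aoff_nonneg (X k - L)
        have := hgap k
        linarith
      calc _ = (aZ τ S L).trace * (X k).trace * aip (aZ τ S L) (X k) := by ring
        _ ≤ _ := by
          refine mul_le_mul (mul_le_mul_of_nonneg_left (hT k) h1) h4 h3 ?_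
          exact mul_nonneg h1 (h2.trans (hT k))
    · simpa using hlim.const_mul ((aZ τ S L).trace * T)
  have hexp : ∀ k, (X k - L) i i = τ⁻¹ * ((aZ τ S L * X k) i i -
      ∑ l ∈ Finset.univ.erase i, aZ τ S L i l * (X k - L) l i) := by
    intro k
    have h1 : (aZ τ S L * X k) i i = (aZ τ S L * (X k - L)) i i := by
      rw [Matrix.mul_sub, hZ0, sub_zero]
    rw [h1, Matrix.mul_apply, ← Finset.add_sum_erase _ _ (Finset.mem_univ i)]
    have h2 : aZ τ S L i i = τ := by simp [aZ]
    rw [h2]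
    field_simp
    ring
  have hsum : Filter.Tendsto (fun k => ∑ l ∈ Finset.univ.erase i, aZ τ S L i l * (X k - L) l i)
      Filter.atTop (nhds 0) := by
    have := tendsto_finsetSum (Finset.univ.erase i) (f := fun l k => aZ τ S L i l * (X k - L) l i)
      (a := fun l => aZ τ S L i l * 0) (x := Filter.atTop) (fun l hl =>
        (hoff l i (Finset.ne_of_mem_erase hl)).const_mul _)
    simpa using this
  have := (hZX.sub hsum).const_mul τ⁻¹
  rw [sub_zero, mul_zero] at this
  exact this.congr fun k => (hexp k).symm

/-- convergence of the alternating-minimization algorithm: the iterates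
`L^{(k)} = D_τ⁺(Σ − D^{(k−1)})`, `D^{(k)} = pdiag(Σ − L^{(k)})` converge to the unique
minimizer `x* = (L*, D*)`, with rate
`F(x_{k+1}) − F(x*) ≤ max{(F(x₀) − F(x*))/2^k, 16R²/k}`. -/
theorem rmtfa_alternating_convergence (p : ℕ) (S : Matrix (Fin p) (Fin p) ℝ)
    (hS : S.IsHermitian) (τ : ℝ) (hτ : 0 < τ)
    (Lseq Dseq : ℕ → Matrix (Fin p) (Fin p) ℝ)
    (hL0 : (Lseq 0).PosSemidef) (hD0 : Dseq 0 = pdiag (S - Lseq 0))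
    (hLit : ∀ k : ℕ, Lseq (k + 1) = softThresh τ (S - Dseq k))
    (hDit : ∀ k : ℕ, Dseq (k + 1) = pdiag (S - Lseq (k + 1)))
    (Lstar Dstar : Matrix (Fin p) (Fin p) ℝ) (hmin : IsRMTFAMin τ S Lstar Dstar)
    (R : ℝ)
    (hR : IsGreatest
      {c : ℝ | ∃ L D : Matrix (Fin p) (Fin p) ℝ, L.PosSemidef ∧ D = pdiag D ∧
        objF τ S L D ≤ objF τ S (Lseq 0) (Dseq 0) ∧
        c = Real.sqrt ((frobNorm (L - Lstar)) ^ 2 + (frobNorm (D - Dstar)) ^ 2)} R) :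
    (∀ ε : ℝ, 0 < ε → ∃ N : ℕ, ∀ k : ℕ, N ≤ k →
      Real.sqrt ((frobNorm (Lseq k - Lstar)) ^ 2 + (frobNorm (Dseq k - Dstar)) ^ 2) < ε) ∧
    (∀ k : ℕ, 1 ≤ k →
      objF τ S (Lseq (k + 1)) (Dseq (k + 1)) - objF τ S Lstar Dstar ≤
        max ((objF τ S (Lseq 0) (Dseq 0) - objF τ S Lstar Dstar) / 2 ^ k)
          (16 * R ^ 2 / k)) := by
  obtain ⟨hLs, hDs, hmin'⟩ := hmin
  have hpd : ∀ M : Matrix (Fin p) (Fin p) ℝ, pdiag M = pdiag (pdiag M) := by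
    intro M; ext i j; by_cases h : i = j <;> simp [pdiag, h]
  have hobj : ∀ L : Matrix (Fin p) (Fin p) ℝ, L.PosSemidef →
      objF τ S L (pdiag (S - L)) = aG τ S L := by
    intro L hL
    rw [objF_eq hL (hpd _)]
    simp [pdiag]
  have hD : ∀ k, Dseq k = pdiag (S - Lseq k) := by
    intro k
    cases k with
    | zero => exact hD0
    | succ k => exact hDit k
  have hstep : ∀ k, Lseq (k + 1) = softThresh τ (S - pdiag (S - Lseq k)) := by
    intro k; rw [hLit, hD]
  have hP : ∀ k, (Lseq k).PosSemidef := by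
    intro k
    cases k with
    | zero => exact hL0
    | succ k => rw [hstep]; exact (prox_step hS hLs).1
  have hF : ∀ k, objF τ S (Lseq k) (Dseq k) = aG τ S (Lseq k) := by
    intro k; rw [hD, hobj _ (hP k)]
  have hsnn : 0 ≤ ∑ i, (S i i - Lstar i i - Dstar i i) ^ 2 :=
    Finset.sum_nonneg fun _ _ => sq_nonneg _
  have hFs := objF_eq (τ := τ) (S := S) hLs hDs
  have hle := hmin' Lstar (pdiag (S - Lstar)) hLs (hpd _)
  rw [hobj _ hLs] at hle
  have hFstar : objF τ S Lstar Dstar = aG τ S Lstar := by linarith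
  have hszero : ∑ i, (S i i - Lstar i i - Dstar i i) ^ 2 = 0 := by linarith
  have hDstar : ∀ i, Dstar i i = S i i - Lstar i i := by
    intro i
    have := (Finset.sum_eq_zero_iff_of_nonneg fun i _ => sq_nonneg _).mp hszero i
      (Finset.mem_univ i)
    have := pow_eq_zero_iff (two_ne_zero) |>.mp this
    linarith
  have hopt : ∀ X : Matrix (Fin p) (Fin p) ℝ, X.PosSemidef → aG τ S Lstar ≤ aG τ S X := by
    intro X hX
    have := hmin' X (pdiag (S - X)) hX (hpd _)
    rwa [hobj _ hX, hFstar] at this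
  -- one-step inequalities
  have hdesc : ∀ k, aG τ S (Lseq (k + 1)) + (1 / 2) * afs (Lstar - Lseq (k + 1)) ≤
      aG τ S Lstar + (1 / 2) * afs (Lstar - Lseq k) := by
    intro k; rw [hstep]; exact (prox_step hS hLs).2
  have hmono : ∀ k, aG τ S (Lseq (k + 1)) ≤ aG τ S (Lseq k) := by
    intro k
    have := (prox_step (τ := τ) (L := Lseq k) hS (hP k)).2
    rw [← hstep] at this
    have h0 : afs (Lseq k - Lseq k) = 0 := by simp [afs]
    have := afs_nonneg (Lseq k - Lseq (k + 1))
    linarith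
  have hrate : ∀ k : ℕ, (k : ℝ) * (aG τ S (Lseq k) - aG τ S Lstar) +
      (1 / 2) * afs (Lstar - Lseq k) ≤ (1 / 2) * afs (Lstar - Lseq 0) := by
    intro k
    induction k with
    | zero => simp
    | succ k ih =>
      have h1 := hdesc k
      have h2 := mul_le_mul_of_nonneg_left (hmono k) (Nat.cast_nonneg (α := ℝ) k)
      push_cast
      linarith
  have hgap0 : ∀ k, 0 ≤ aG τ S (Lseq k) - aG τ S Lstar := fun k =>
    sub_nonneg.mpr (hopt _ (hP k))
  have hbound : ∀ k : ℕ, (k : ℝ) * (aG τ S (Lseq k) - aG τ S Lstar) ≤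
      (1 / 2) * afs (Lstar - Lseq 0) := by
    intro k
    have := hrate k
    have := afs_nonneg (Lstar - Lseq k)
    linarith
  have hneg : ∀ A B : Matrix (Fin p) (Fin p) ℝ, afs (A - B) = afs (B - A) := by
    intro A B
    refine Finset.sum_congr rfl fun i _ => Finset.sum_congr rfl fun j _ => ?_
    simp only [Matrix.sub_apply]; ring
  constructor
  · have hlim : Filter.Tendsto (fun k => aG τ S (Lseq k) - aG τ S Lstar) Filter.atTop
        (nhds 0) := by
      rw [← Filter.tendsto_add_atTop_iff_nat 1]
      refine squeeze_zero (g := fun k : ℕ => ((1 / 2) * afs (Lstar - Lseq 0)) * (1 / ((k : ℝ) + 1)))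
        (fun k => hgap0 _) (fun k => ?_) ?_
      · have := hbound (k + 1)
        push_cast at this
        rw [mul_one_div, le_div_iff₀ (by positivity)]
        linarith
      · simpa using (tendsto_one_div_add_atTop_nhds_zero_nat (𝕜 := ℝ)).const_mul
          ((1 / 2) * afs (Lstar - Lseq 0))
    have hmono0 : ∀ k, aG τ S (Lseq k) ≤ aG τ S (Lseq 0) := by
      intro k
      induction k with
      | zero => exact le_rfl
      | succ k ih => exact (hmono k).trans ih
    have htr : ∀ k, (Lseq k).trace ≤ aG τ S (Lseq 0) / τ := by
      intro k
      rw [le_div_iff₀ hτ]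
      have h1 : objF τ S (Lseq k) (Dseq k) ≤ aG τ S (Lseq 0) := by
        rw [hF]; exact hmono0 k
      rw [objF, aux_nuc (hP k)] at h1
      nlinarith [sq_nonneg (frobNorm (S - (Lseq k + Dseq k)))]
    have hent := entry_tendsto hτ hS hLs hopt Lseq hP hlim _ htr
    have hLt : Filter.Tendsto (fun k => afs (Lseq k - Lstar)) Filter.atTop (nhds 0) := by
      have := tendsto_finsetSum (x := Filter.atTop) (Finset.univ : Finset (Fin p))
        (f := fun i k => ∑ j, ((Lseq k - Lstar) i j) ^ 2) (a := fun _ => 0) (fun i _ => by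
          have := tendsto_finsetSum (x := Filter.atTop) (Finset.univ : Finset (Fin p))
            (f := fun j k => ((Lseq k - Lstar) i j) ^ 2) (a := fun _ => 0) (fun j _ => by
              simpa using (hent i j).pow 2)
          simpa using this)
      simpa [afs] using this
    have hDle : ∀ k, afs (Dseq k - Dstar) ≤ afs (Lseq k - Lstar) := by
      intro k
      refine Finset.sum_le_sum fun i _ => Finset.sum_le_sum fun j _ => ?_
      rw [hD]
      by_cases h : i = j
      · subst h
        simp only [Matrix.sub_apply, hDstar, pdiag, Matrix.of_apply, if_true]
        apply le_of_eq; ring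
      · rw [hDs]
        simp only [Matrix.sub_apply, pdiag, Matrix.of_apply, if_neg h]
        simpa using sq_nonneg _
    have hsq : Filter.Tendsto (fun k => Real.sqrt ((frobNorm (Lseq k - Lstar)) ^ 2 +
        (frobNorm (Dseq k - Dstar)) ^ 2)) Filter.atTop (nhds 0) := by
      have hDt : Filter.Tendsto (fun k => afs (Dseq k - Dstar)) Filter.atTop (nhds 0) :=
        squeeze_zero (fun k => afs_nonneg _) hDle hLt
      have := (Real.continuous_sqrt.tendsto _).comp (hLt.add hDt)
      simpa [frob_sq, Function.comp_def] using this
    intro ε hε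
    exact Filter.eventually_atTop.mp (hsq.eventually (gt_mem_nhds hε))
  · intro k hk
    refine le_trans ?_ (le_max_right _ _)
    rw [hF, hFstar]
    have hkp : (0 : ℝ) < k := by exact_mod_cast hk
    have hR0 := hR.2 ⟨Lseq 0, Dseq 0, hL0, by rw [hD0]; exact hpd _, le_rfl, rfl⟩
    rw [frob_sq, frob_sq] at hR0
    have ha := afs_nonneg (Lseq 0 - Lstar)
    have hb := afs_nonneg (Dseq 0 - Dstar)
    have hR2 : afs (Lseq 0 - Lstar) ≤ R ^ 2 := by
      have := pow_le_pow_left₀ (Real.sqrt_nonneg _) hR0 2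
      rw [Real.sq_sqrt (by linarith)] at this
      linarith
    rw [hneg] at hbound
    rw [le_div_iff₀ hkp]
    have h1 := hbound (k + 1)
    have h2 := hgap0 (k + 1)
    push_cast at h1
    nlinarith [sq_nonneg R]
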